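/- Let β, γ ∈ (0,1) and let p(t,x,y) = ∫_{(0,∞)} p_{2γ}(t^β s^{-β}, x-y) μ_β(ds) be the fundamental solution of the space-time fractional equation ∂^β u/∂t^β = -(-Δ)^γ u on ℝ^n. Then, as |x-y|^{-2γ/β} t → 0, p(t,x,y) ∼ (γ 4^γ Γ(n/2 + γ) / (π^{n/2} Γ(1-γ) β Γ(β))) |x-y|^{-n-2γ} t^β; that is, for every ε > 0 there exists δ > 0 such that whenever t > 0, x ≠ y ∈ ℝ^n and |x-y|^{-2γ/β} t ≤ δ, the ratio of the two sides lies within ε of 1. -/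

import Mathlib

/-!
The proof subordinates twice. Let `ν` be the one-sided `γ`-stable law, with Laplace transform
`e^{-r^γ}`. The function `e^{-s|ξ|^{2γ}}` is a `ν`-mixture of Gaussians, so the isotropic
`2γ`-stable density is a mixture of heat kernels. By scaling (`stable_density_eq`), for `z ≠ 0`,

  `p_{2γ}(s, z) = |z|^{-n} G(u)`, where `u = s |z|^{-2γ}`, `G(u) = ∫ h(u^{1/γ} w) ν(dw)`

and `h(v) = (4πv)^{-n/2} e^{-1/(4v)}` is the heat kernel at distance `1`. The key fact is that
`G(u) / u` is bounded on `u > 0` and converges as `u → 0`. Indeed the measures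
`u⁻¹ (1 - e^{-w}) ν_u(dw)`, where `ν_u` is the image of `ν` under `w ↦ u^{1/γ} w`, have mass at most
`1` and converge weakly, in the variable `e^{-w} ∈ [0,1]`, to `(1 - e^{-w})` times the Lévy measure
`γ / Γ(1-γ) w^{-1-γ} dw`. On monomials in `e^{-w}` this is a computation with Laplace transforms and
the Lévy–Khintchine formula for `r^γ` (`integral_levy`), and the Weierstrass theorem does the rest
(`tendsto_stableFunctional`). The quotient `h(w) / (1 - e^{-w})` is a continuous function of
`e^{-w}` on `[0,1]` (`continuous_heatQuotient`), so `G(u) / u` converges to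
`γ / Γ(1-γ) ∫ h(w) w^{-1-γ} dw`, a Gamma integral (`levyFunctional_heatQuotient`).

With `τ = t^β |x-y|^{-2γ}`, the fundamental solution is `|x-y|^{-n} ∫ G(τ s^{-β}) μ(ds)`. Dividing by
`τ` and letting `τ → 0` under the integral sign, which the bound on `G(u) / u` and the finiteness of
`∫ s^{-β} μ(ds) = 1 / (β Γ(β))` (`stable_neg_moment`) allow, gives the asymptotics.

The law `ν` is constructed in `exists_stable` as a limit point of normalised sums of independent
Pareto variables.
-/

open MeasureTheory Set RealInnerProductSpace

open Filter Topology

/-! ### The Lévy–Khintchine formula for `r ^ γ` -/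

lemma integrableOn_levy {γ r : ℝ} (hγ0 : 0 < γ) (hγ1 : γ < 1) (hr : 0 < r) :
    IntegrableOn (fun w : ℝ => (1 - Real.exp (-(r * w))) * w ^ (-1 - γ)) (Ioi 0) := by
  have hmeas : ∀ s : Set ℝ, AEStronglyMeasurable
      (fun w : ℝ => (1 - Real.exp (-(r * w))) * w ^ (-1 - γ)) (volume.restrict s) := by
    intro s
    exact Measurable.aestronglyMeasurable (by fun_prop)
  rw [← Ioc_union_Ioi_eq_Ioi (zero_le_one' ℝ)]
  refine IntegrableOn.union ?_ ?_
  · have h : IntegrableOn (fun w : ℝ => r * w ^ (-γ)) (Ioc 0 1) := by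
      have := intervalIntegral.intervalIntegrable_rpow' (a := 0) (b := 1) (r := -γ) (by linarith)
      rw [intervalIntegrable_iff_integrableOn_Ioc_of_le zero_le_one] at this
      exact this.const_mul r
    refine Integrable.mono' h (hmeas _) ?_
    filter_upwards [ae_restrict_mem measurableSet_Ioc] with w hw
    have hw0 : 0 < w := hw.1
    have h1 : 0 ≤ 1 - Real.exp (-(r * w)) := by
      have : Real.exp (-(r * w)) ≤ 1 := Real.exp_le_one_iff.2 (by nlinarith)
      linarith
    have h2 : 1 - Real.exp (-(r * w)) ≤ r * w := by
      have := Real.add_one_le_exp (-(r * w)); linarith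
    rw [Real.norm_of_nonneg (by positivity)]
    calc _ ≤ r * w * w ^ (-1 - γ) := by gcongr
      _ = r * w ^ (-γ) := by
        rw [mul_assoc, ← Real.rpow_one_add' hw0.le (by linarith)]; ring_nf
  · have h := integrableOn_Ioi_rpow_of_lt (a := -1 - γ) (c := 1) (by linarith) one_pos
    refine Integrable.mono' h (hmeas _) ?_
    filter_upwards [ae_restrict_mem measurableSet_Ioi] with w hw
    have hw0 : 0 < w := lt_trans one_pos hw
    have h1 : 0 ≤ 1 - Real.exp (-(r * w)) := by
      have : Real.exp (-(r * w)) ≤ 1 := Real.exp_le_one_iff.2 (by nlinarith)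
      linarith
    have h2 : 1 - Real.exp (-(r * w)) ≤ 1 := by
      have := Real.exp_pos (-(r * w)); linarith
    rw [Real.norm_of_nonneg (by positivity)]
    exact mul_le_of_le_one_left (by positivity) h2

/-- The Lévy–Khintchine representation of `r ^ γ`, obtained by integrating by parts. -/
lemma integral_levy {γ r : ℝ} (hγ0 : 0 < γ) (hγ1 : γ < 1) (hr : 0 < r) :
    ∫ w in Ioi (0:ℝ), (1 - Real.exp (-(r * w))) * w ^ (-1 - γ)
      = Real.Gamma (1 - γ) / γ * r ^ γ := by
  have hint := integrableOn_levy hγ0 hγ1 hr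
  have hint2 : IntegrableOn (fun w : ℝ => w ^ (-γ) * Real.exp (-(r * w))) (Ioi 0) := by
    have := integrableOn_rpow_mul_exp_neg_mul_rpow (p := 1) (s := -γ) (b := r) (by linarith)
      one_pos hr
    refine this.congr_fun (fun x _ => by simp) measurableSet_Ioi
  have hval2 : ∫ w in Ioi (0:ℝ), w ^ (-γ) * Real.exp (-(r * w))
      = r ^ (γ - 1) * Real.Gamma (1 - γ) := by
    have := Real.integral_rpow_mul_exp_neg_mul_Ioi (a := 1 - γ) (r := r) (by linarith) hr
    rw [show (1 - γ - 1 : ℝ) = -γ by ring] at this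
    rw [this, one_div, Real.inv_rpow hr.le, ← Real.rpow_neg hr.le]
    ring_nf
  -- the primitive `w ↦ (1 - e^{-rw}) w^{-γ}` vanishes at both ends
  have hder : ∀ w ∈ Ioi (0:ℝ), HasDerivAt
      (fun w : ℝ => (1 - Real.exp (-(r * w))) * w ^ (-γ))
      (r * (w ^ (-γ) * Real.exp (-(r * w)))
        - γ * ((1 - Real.exp (-(r * w))) * w ^ (-1 - γ))) w := by
    intro w hw
    have hw0 : 0 < w := hw
    have h1 : HasDerivAt (fun w : ℝ => 1 - Real.exp (-(r * w)))
        (- (Real.exp (-(r * w)) * (-(r * 1)))) w :=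
      (((hasDerivAt_id w).const_mul r).neg.exp).const_sub 1
    have h2 := Real.hasDerivAt_rpow_const (x := w) (p := -γ) (Or.inl hw0.ne')
    convert! h1.mul h2 using 1
    rw [show -γ - 1 = -1 - γ by ring]
    ring
  have hbound : ∀ w ∈ Ioi (0:ℝ), 0 ≤ (1 - Real.exp (-(r * w))) ∧
      (1 - Real.exp (-(r * w))) ≤ r * w ∧ (1 - Real.exp (-(r * w))) ≤ 1 := by
    intro w hw
    have hw0 : 0 < w := hw
    refine ⟨?_, ?_, ?_⟩
    · have : Real.exp (-(r * w)) ≤ 1 := Real.exp_le_one_iff.2 (by nlinarith)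
      linarith
    · have := Real.add_one_le_exp (-(r * w)); linarith
    · have := Real.exp_pos (-(r * w)); linarith
  have hcont : ContinuousWithinAt (fun w : ℝ => (1 - Real.exp (-(r * w))) * w ^ (-γ))
      (Ici 0) 0 := by
    rw [← continuousWithinAt_Ioi_iff_Ici]
    have hlim : Tendsto (fun w : ℝ => r * w ^ (1 - γ)) (𝓝[>] 0) (𝓝 0) := by
      have : Tendsto (fun w : ℝ => r * w ^ (1 - γ)) (𝓝 0) (𝓝 (r * 0 ^ (1 - γ))) :=
        ((Real.continuousAt_rpow_const 0 (1 - γ) (Or.inr (by linarith))).tendsto).const_mul r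
      rw [Real.zero_rpow (by linarith), mul_zero] at this
      exact this.mono_left nhdsWithin_le_nhds
    unfold ContinuousWithinAt
    simp only [mul_zero, neg_zero, Real.exp_zero, sub_self, zero_mul]
    refine tendsto_of_tendsto_of_tendsto_of_le_of_le' tendsto_const_nhds hlim ?_ ?_
    · filter_upwards [self_mem_nhdsWithin] with w hw
      have hw0 : 0 < w := hw
      have := (hbound w hw).1
      positivity
    · filter_upwards [self_mem_nhdsWithin] with w hw
      have hw0 : 0 < w := hw
      calc _ ≤ r * w * w ^ (-γ) := by
            have := (hbound w hw).2.1
            gcongr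
        _ = r * w ^ (1 - γ) := by
          rw [mul_assoc, ← Real.rpow_one_add' hw0.le (by linarith)]; ring_nf
  have hinf : Tendsto (fun w : ℝ => (1 - Real.exp (-(r * w))) * w ^ (-γ)) atTop (𝓝 0) := by
    refine tendsto_of_tendsto_of_tendsto_of_le_of_le' tendsto_const_nhds
      (tendsto_rpow_neg_atTop hγ0) ?_ ?_
    · filter_upwards [Ioi_mem_atTop 0] with w hw
      have hw0 : 0 < w := hw
      have := (hbound w hw).1
      positivity
    · filter_upwards [Ioi_mem_atTop 0] with w hw
      have hw0 : 0 < w := hw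
      exact mul_le_of_le_one_left (by positivity) (hbound w hw).2.2
  have key := integral_Ioi_of_hasDerivAt_of_tendsto hcont hder
    ((hint2.const_mul r).sub (hint.const_mul γ)) hinf
  rw [integral_sub (hint2.const_mul r) (hint.const_mul γ), integral_const_mul,
    integral_const_mul, hval2] at key
  simp only [mul_zero, neg_zero, Real.exp_zero, sub_self, zero_mul] at key
  have hrr : r * r ^ (γ - 1) = r ^ γ := by
    rw [← Real.rpow_one_add' hr.le (by linarith)]; ring_nf
  field_simp
  rw [← hrr]
  linarith

/-! ### Existence of the one-sided stable law -/

/-- Integration against the Pareto law with minimum `ε` and exponent `γ`, whose density is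
`γ ε^γ w^{-1-γ}` on `w > ε`. -/
lemma integral_pareto {ε γ : ℝ} (hε : 0 < ε) (hγ0 : 0 < γ) (g : ℝ → ℝ) :
    ∫ w, g w ∂(ProbabilityTheory.paretoMeasure ε γ)
      = γ * ε ^ γ * ∫ w in Ioi ε, g w * w ^ (-1 - γ) := by
  have hm : Measurable (ProbabilityTheory.paretoPDF ε γ) :=
    (ProbabilityTheory.measurable_paretoPDFReal ε γ).ennreal_ofReal
  unfold ProbabilityTheory.paretoMeasure
  rw [integral_withDensity_eq_integral_toReal_smul hm (by simp [ProbabilityTheory.paretoPDF])]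
  rw [← integral_Ici_eq_integral_Ioi, ← integral_const_mul,
    ← integral_indicator measurableSet_Ici]
  refine integral_congr_ae (Eventually.of_forall fun w => ?_)
  by_cases hw : ε ≤ w
  · have hw0 : 0 < w := hε.trans_le hw
    simp only [ProbabilityTheory.paretoPDF, ProbabilityTheory.paretoPDFReal, hw, if_true,
      smul_eq_mul, indicator, mem_Ici]
    rw [ENNReal.toReal_ofReal (by positivity), show -(γ + 1) = -1 - γ by ring]
    ring
  · simp [ProbabilityTheory.paretoPDF, ProbabilityTheory.paretoPDFReal, hw]

/-- The Laplace transform of the Pareto law. The law lives on `w > ε`, so replacing `w` by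
`max w 0` does not change it; it keeps `e^{-max w 0}` inside `[0,1]` for every `w`. -/
lemma laplace_pareto {ε γ r : ℝ} (hε : 0 < ε) (hγ0 : 0 < γ) (hr : 0 < r) :
    ∫ w, Real.exp (-(r * max w 0)) ∂(ProbabilityTheory.paretoMeasure ε γ)
      = 1 - γ * ε ^ γ * ∫ w in Ioi ε, (1 - Real.exp (-(r * w))) * w ^ (-1 - γ) := by
  have := ProbabilityTheory.isProbabilityMeasure_paretoMeasure hε hγ0
  have h := integral_pareto hε hγ0 (fun w => 1 - Real.exp (-(r * max w 0)))
  rw [integral_sub (integrable_const 1)] at h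
  · rw [integral_const, probReal_univ, one_smul] at h
    have h2 : ∫ w in Ioi ε, (1 - Real.exp (-(r * max w 0))) * w ^ (-1 - γ)
        = ∫ w in Ioi ε, (1 - Real.exp (-(r * w))) * w ^ (-1 - γ) := by
      refine setIntegral_congr_fun measurableSet_Ioi fun w hw => ?_
      simp only [max_eq_left (hε.trans hw).le]
    rw [h2] at h
    linarith
  · refine Integrable.of_bound (C := 1) (Measurable.aestronglyMeasurable (by fun_prop)) ?_
    refine Eventually.of_forall fun w => ?_
    rw [Real.norm_of_nonneg (Real.exp_pos _).le]
    refine Real.exp_le_one_iff.2 ?_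
    have : 0 ≤ max w 0 := le_max_right _ _
    nlinarith

/-- Existence of the one-sided `γ`-stable law. It is obtained as a limit point of the laws of sums
of `N` independent Pareto variables with minimum `(N Γ(1-γ))^{-1/γ}`, transported to the compact
interval `[0,1]` by `w ↦ e^{-w}`. -/
lemma exists_stable {γ : ℝ} (hγ0 : 0 < γ) (hγ1 : γ < 1) :
    ∃ ν : Measure ℝ, IsProbabilityMeasure ν ∧ (∀ᵐ w ∂ν, 0 < w) ∧
      ∀ r : ℝ, 0 ≤ r → ∫ w, Real.exp (-(r * w)) ∂ν = Real.exp (-(r ^ γ)) := by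
  have hG : 0 < Real.Gamma (1 - γ) := Real.Gamma_pos_of_pos (by linarith)
  let ε : ℕ → ℝ := fun N => (N * Real.Gamma (1 - γ)) ^ (-γ⁻¹)
  have hε : ∀ N : ℕ, 0 < N → 0 < ε N := fun N hN => by positivity
  have hεγ : ∀ N : ℕ, 0 < N → ε N ^ γ = (N * Real.Gamma (1 - γ))⁻¹ := fun N hN => by
    simp only [ε]
    rw [← Real.rpow_mul (by positivity), neg_mul, inv_mul_cancel₀ hγ0.ne', Real.rpow_neg_one]
  have hεlim : Tendsto ε atTop (𝓝 0) := by
    refine (tendsto_rpow_neg_atTop (inv_pos.2 hγ0)).comp ?_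
    exact tendsto_natCast_atTop_atTop.atTop_mul_const hG
  let ρ : ℕ → Measure ℝ := fun k => ProbabilityTheory.paretoMeasure (ε (k + 1)) γ
  have hρ : ∀ k, IsProbabilityMeasure (ρ k) := fun k =>
    ProbabilityTheory.isProbabilityMeasure_paretoMeasure (hε _ k.succ_pos) hγ0
  let e : ℝ → unitInterval := fun w => ⟨Real.exp (-(max w 0)), (Real.exp_pos _).le,
    Real.exp_le_one_iff.2 (by simp)⟩
  have he : Continuous e := by
    refine Continuous.subtype_mk ?_ _
    fun_prop
  have hS : ∀ k, Measurable (fun ω : Fin (k + 1) → ℝ => ∏ i, e (ω i)) := fun k =>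
    (continuous_finsetProd _ fun i _ => he.comp (continuous_apply i)).measurable
  let κ : ℕ → ProbabilityMeasure unitInterval := fun k =>
    ⟨(Measure.pi fun _ : Fin (k + 1) => ρ k).map (fun ω => ∏ i, e (ω i)),
      Measure.isProbabilityMeasure_map (hS k).aemeasurable⟩
  have hκint : ∀ k, ∀ r : ℝ, 0 < r → ∫ y, (y : ℝ) ^ r ∂(κ k : Measure unitInterval)
      = (1 - γ * ε (k + 1) ^ γ * ∫ w in Ioi (ε (k + 1)),
          (1 - Real.exp (-(r * w))) * w ^ (-1 - γ)) ^ (k + 1) := by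
    intro k r hr
    have h1 : ∫ y, (y : ℝ) ^ r ∂(κ k : Measure unitInterval)
        = ∫ ω, ∏ i, (Real.exp (-(r * max (ω i) 0))) ∂(Measure.pi fun _ : Fin (k + 1) => ρ k) := by
      simp only [κ, ProbabilityMeasure.coe_mk]
      rw [integral_map (hS k).aemeasurable]
      · refine integral_congr_ae (Eventually.of_forall fun ω => ?_)
        have hcoe : ((∏ i, e (ω i) : unitInterval) : ℝ) = ∏ i, Real.exp (-(max (ω i) 0)) :=
          map_prod unitInterval.submonoid.subtype (fun i => e (ω i)) _
        beta_reduce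
        rw [hcoe, ← Real.finsetProd_rpow _ _ (fun i _ => (Real.exp_pos _).le)]
        refine Finset.prod_congr rfl fun i _ => ?_
        rw [← Real.exp_mul]; ring_nf
      · exact Measurable.aestronglyMeasurable (by fun_prop)
    rw [h1, integral_fintype_prod_eq_pow (fun w => Real.exp (-(r * max w 0))), Fintype.card_fin]
    congr 1
    exact laplace_pareto (hε (k + 1) k.succ_pos) hγ0 hr
  -- by the choice of `ε`, the base of the power is `1 - r^γ / N + o(1 / N)` with `N = k + 1`
  have hκlim : ∀ r : ℝ, 0 < r → Tendsto (fun k => ∫ y, (y : ℝ) ^ r ∂(κ k : Measure unitInterval))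
      atTop (𝓝 (Real.exp (-(r ^ γ)))) := by
    intro r hr
    have hJ : Tendsto (fun N : ℕ => ∫ w in Ioi (ε N), (1 - Real.exp (-(r * w))) * w ^ (-1 - γ))
        atTop (𝓝 (Real.Gamma (1 - γ) / γ * r ^ γ)) := by
      rw [← integral_levy hγ0 hγ1 hr]
      have := (aecover_Ioi_of_Ioi (μ := volume) hεlim).integral_tendsto_of_countably_generated
        (integrableOn_levy hγ0 hγ1 hr)
      refine this.congr' ?_
      filter_upwards [eventually_gt_atTop 0] with N hN
      rw [Measure.restrict_restrict measurableSet_Ioi, Ioi_inter_Ioi, max_eq_left (hε N hN).le]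
    have := Real.tendsto_one_add_pow_exp_of_tendsto (t := -(r ^ γ))
      (g := fun N : ℕ => -(γ * ε N ^ γ * ∫ w in Ioi (ε N),
          (1 - Real.exp (-(r * w))) * w ^ (-1 - γ))) ?_
    · refine ((tendsto_add_atTop_iff_nat 1).2 this).congr fun k => ?_
      rw [hκint k r hr, ← sub_eq_add_neg]
    · have h2 := (hJ.const_mul (γ / Real.Gamma (1 - γ))).neg
      have h3 : -(γ / Real.Gamma (1 - γ) * (Real.Gamma (1 - γ) / γ * r ^ γ)) = -(r ^ γ) := by
        field_simp
      rw [h3] at h2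
      refine h2.congr' ?_
      filter_upwards [eventually_gt_atTop 0] with N hN
      rw [hεγ N hN]
      have : (N : ℝ) ≠ 0 := by positivity
      field_simp
  -- the probability measures on `[0,1]` form a compact space, so every ultrafilter has a limit
  let U : Ultrafilter (ProbabilityMeasure unitInterval) := (hyperfilter ℕ).map κ
  let K : ProbabilityMeasure unitInterval := U.lim
  have hK : Tendsto κ (hyperfilter ℕ : Filter ℕ) (𝓝 K) := U.le_nhds_lim
  have hKint : ∀ r : ℝ, 0 < r → ∫ y, (y : ℝ) ^ r ∂(K : Measure unitInterval)
      = Real.exp (-(r ^ γ)) := by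
    intro r hr
    rw [ProbabilityMeasure.tendsto_iff_forall_integral_tendsto] at hK
    have hc : Continuous fun y : unitInterval => (y : ℝ) ^ r :=
      continuous_subtype_val.rpow_const fun _ => Or.inr hr.le
    exact tendsto_nhds_unique (hK (BoundedContinuousFunction.mkOfCompact ⟨_, hc⟩))
      ((hκlim r hr).mono_left Nat.hyperfilter_le_atTop)
  have hy0 : ∀ y : unitInterval, 0 ≤ (y : ℝ) := fun y => y.2.1
  have hy1 : ∀ y : unitInterval, (y : ℝ) ≤ 1 := fun y => y.2.2
  have hbd : ∀ r : ℝ, 0 < r → ∀ y : unitInterval, ‖(y : ℝ) ^ r‖ ≤ 1 := fun r hr y => by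
    rw [Real.norm_of_nonneg (Real.rpow_nonneg (hy0 y) _)]
    exact Real.rpow_le_one (hy0 y) (hy1 y) hr.le
  have hmeas : ∀ r : ℝ, AEStronglyMeasurable (fun y : unitInterval => (y : ℝ) ^ r)
      (K : Measure unitInterval) := fun r => Measurable.aestronglyMeasurable (by fun_prop)
  -- letting `r → ∞` rules out an atom of `K` at `1`, that is, of the stable law at `0`
  have hatom1 : (K : Measure unitInterval) {1} = 0 := by
    have h1 : Tendsto (fun r : ℝ => ∫ y, (y : ℝ) ^ r ∂(K : Measure unitInterval)) atTop
        (𝓝 (∫ y, ({1} : Set unitInterval).indicator (1 : unitInterval → ℝ) y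
          ∂(K : Measure unitInterval))) := by
      refine tendsto_integral_filter_of_dominated_convergence (fun _ => 1)
        (Eventually.of_forall hmeas) ?_ (integrable_const _) (Eventually.of_forall fun y => ?_)
      · filter_upwards [eventually_gt_atTop 0] with r hr
        exact Eventually.of_forall (hbd r hr)
      · by_cases hy : y = 1
        · subst hy; simp
        · rw [indicator_of_notMem (by simpa using hy)]
          refine tendsto_rpow_atTop_of_base_lt_one _ (by linarith [hy0 y])
            (lt_of_le_of_ne (hy1 y) fun h => hy (Subtype.ext h))
    rw [integral_indicator_one (measurableSet_singleton _)] at h1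
    have h2 : Tendsto (fun r : ℝ => ∫ y, (y : ℝ) ^ r ∂(K : Measure unitInterval)) atTop (𝓝 0) := by
      refine (Real.tendsto_exp_neg_atTop_nhds_zero.comp (tendsto_rpow_atTop hγ0)).congr' ?_
      filter_upwards [eventually_gt_atTop 0] with r hr
      exact (hKint r hr).symm
    have h3 := tendsto_nhds_unique h1 h2
    rwa [measureReal_eq_zero_iff] at h3
  -- letting `r → 0` rules out an atom at `0`: no mass of the stable law escapes to infinity
  have hatom0 : (K : Measure unitInterval) {0} = 0 := by
    have h1 : Tendsto (fun r : ℝ => ∫ y, (y : ℝ) ^ r ∂(K : Measure unitInterval)) (𝓝[>] 0)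
        (𝓝 (∫ y, ({0}ᶜ : Set unitInterval).indicator (1 : unitInterval → ℝ) y
          ∂(K : Measure unitInterval))) := by
      refine tendsto_integral_filter_of_dominated_convergence (fun _ => 1)
        (Eventually.of_forall hmeas) ?_ (integrable_const _) (Eventually.of_forall fun y => ?_)
      · filter_upwards [self_mem_nhdsWithin] with r hr
        exact Eventually.of_forall (hbd r hr)
      · by_cases hy : y = 0
        · subst hy
          rw [indicator_of_notMem (by simp)]
          refine tendsto_const_nhds.congr' ?_
          filter_upwards [self_mem_nhdsWithin] with r hr
          simp [Real.zero_rpow (ne_of_gt hr)]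
        · rw [indicator_of_mem (by simpa using hy)]
          have hne : (y : ℝ) ≠ 0 := fun h => hy (Subtype.ext h)
          have := (Real.continuousAt_const_rpow (b := 0) hne).tendsto
          rw [Real.rpow_zero] at this
          exact this.mono_left nhdsWithin_le_nhds
    rw [integral_indicator_one (measurableSet_singleton _).compl] at h1
    have h2 : Tendsto (fun r : ℝ => ∫ y, (y : ℝ) ^ r ∂(K : Measure unitInterval)) (𝓝[>] 0)
        (𝓝 1) := by
      have : Tendsto (fun r : ℝ => Real.exp (-(r ^ γ))) (𝓝 0) (𝓝 (Real.exp (-((0:ℝ) ^ γ)))) :=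
        (Real.continuous_exp.tendsto _).comp
          (Real.continuousAt_rpow_const 0 γ (Or.inr hγ0.le)).tendsto.neg
      rw [Real.zero_rpow hγ0.ne', neg_zero, Real.exp_zero] at this
      refine (this.mono_left nhdsWithin_le_nhds).congr' ?_
      filter_upwards [self_mem_nhdsWithin] with r hr
      exact (hKint r hr).symm
    have h3 := tendsto_nhds_unique h1 h2
    rw [measureReal_compl (measurableSet_singleton _), probReal_univ, sub_eq_self,
      measureReal_eq_zero_iff] at h3
    exact h3
  have hae : ∀ᵐ y : unitInterval ∂(K : Measure unitInterval), 0 < (y : ℝ) ∧ (y : ℝ) < 1 := by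
    have a0 : ∀ᵐ y : unitInterval ∂(K : Measure unitInterval), y ≠ 0 := by
      simpa [ae_iff] using hatom0
    have a1 : ∀ᵐ y : unitInterval ∂(K : Measure unitInterval), y ≠ 1 := by
      simpa [ae_iff] using hatom1
    filter_upwards [a0, a1] with y h0 h1
    exact ⟨lt_of_le_of_ne (hy0 y) fun h => h0 (Subtype.ext h.symm),
      lt_of_le_of_ne (hy1 y) fun h => h1 (Subtype.ext h)⟩
  have hlog : Measurable fun y : unitInterval => -Real.log y := by fun_prop
  have hprob : IsProbabilityMeasure
      ((K : Measure unitInterval).map fun y : unitInterval => -Real.log y) :=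
    Measure.isProbabilityMeasure_map hlog.aemeasurable
  refine ⟨(K : Measure unitInterval).map fun y : unitInterval => -Real.log y, hprob, ?_, ?_⟩
  · rw [ae_map_iff hlog.aemeasurable measurableSet_Ioi]
    filter_upwards [hae] with y hy
    have := Real.log_neg hy.1 hy.2
    linarith
  · intro r hr
    rcases hr.eq_or_lt with rfl | hr
    · simp [Real.zero_rpow hγ0.ne']
    · rw [integral_map hlog.aemeasurable (Measurable.aestronglyMeasurable (by fun_prop)),
        ← hKint r hr]
      refine integral_congr_ae ?_
      filter_upwards [hae] with y hy
      rw [Real.rpow_def_of_pos hy.1]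
      ring_nf

/-! ### Convergence of the rescaled stable laws to the Lévy measure -/

/-- The normalised functional `u⁻¹ ∫ F(e^{-Uw}) (1 - e^{-Uw}) ν(dw)` with `U = u^{1/γ}`, where `ν`
plays the role of the one-sided `γ`-stable law. -/
noncomputable def stableFunctional (ν : Measure ℝ) (γ u : ℝ) (F : ℝ → ℝ) : ℝ :=
  u⁻¹ * ∫ w, F (Real.exp (-(u ^ γ⁻¹ * w))) * (1 - Real.exp (-(u ^ γ⁻¹ * w))) ∂ν

/-- The integral of `F(e^{-w}) (1 - e^{-w})` against the Lévy measure
`γ / Γ(1-γ) w^{-1-γ} dw` of the one-sided `γ`-stable law. -/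
noncomputable def levyFunctional (γ : ℝ) (F : ℝ → ℝ) : ℝ :=
  γ / Real.Gamma (1 - γ) *
    ∫ w in Ioi (0:ℝ), F (Real.exp (-w)) * ((1 - Real.exp (-w)) * w ^ (-1 - γ))

lemma exp_neg_mem {x : ℝ} (hx : 0 ≤ x) : Real.exp (-x) ∈ Icc (0:ℝ) 1 :=
  ⟨(Real.exp_pos _).le, Real.exp_le_one_iff.2 (by linarith)⟩

section

variable {ν : Measure ℝ} {γ : ℝ}

lemma integrable_stable [IsProbabilityMeasure ν] (hpos : ∀ᵐ w ∂ν, 0 < w) {U : ℝ} (hU : 0 ≤ U)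
    {F : ℝ → ℝ} (hF : Continuous F) :
    Integrable (fun w => F (Real.exp (-(U * w))) * (1 - Real.exp (-(U * w)))) ν := by
  obtain ⟨C, hC⟩ := isCompact_Icc.exists_bound_of_continuousOn
    (s := Icc (0:ℝ) 1) hF.continuousOn
  refine Integrable.of_bound (C := C) (Measurable.aestronglyMeasurable (by fun_prop)) ?_
  filter_upwards [hpos] with w hw
  have h := exp_neg_mem (x := U * w) (by positivity)
  have h1 := hC _ h
  rw [norm_mul]
  refine (mul_le_of_le_one_right (norm_nonneg _) ?_).trans h1
  rw [Real.norm_of_nonneg (by linarith [h.2])]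
  linarith [h.1]

lemma integrable_levyFunctional (hγ0 : 0 < γ) (hγ1 : γ < 1) {F : ℝ → ℝ} (hF : Continuous F) :
    IntegrableOn (fun w => F (Real.exp (-w)) * ((1 - Real.exp (-w)) * w ^ (-1 - γ))) (Ioi 0) := by
  obtain ⟨C, hC⟩ := isCompact_Icc.exists_bound_of_continuousOn
    (s := Icc (0:ℝ) 1) hF.continuousOn
  have h := integrableOn_levy hγ0 hγ1 one_pos
  simp only [one_mul] at h
  refine Integrable.bdd_mul (c := C) h (Measurable.aestronglyMeasurable (by fun_prop)) ?_
  filter_upwards [ae_restrict_mem measurableSet_Ioi] with w hw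
  exact hC _ (exp_neg_mem (le_of_lt hw))

lemma integral_one_sub_exp [IsProbabilityMeasure ν] (hpos : ∀ᵐ w ∂ν, 0 < w)
    (hlap : ∀ r : ℝ, 0 ≤ r → ∫ w, Real.exp (-(r * w)) ∂ν = Real.exp (-(r ^ γ)))
    {U : ℝ} (hU : 0 ≤ U) :
    ∫ w, (1 - Real.exp (-(U * w))) ∂ν = 1 - Real.exp (-(U ^ γ)) := by
  rw [integral_sub (integrable_const 1), hlap U hU]
  · simp
  · refine Integrable.of_bound (C := 1) (Measurable.aestronglyMeasurable (by fun_prop)) ?_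
    filter_upwards [hpos] with w hw
    rw [Real.norm_of_nonneg (Real.exp_pos _).le]
    exact (exp_neg_mem (x := U * w) (by positivity)).2

/-- `stableFunctional` has norm at most `1` for the supremum norm on `[0,1]`, because its value at
the constant `1` is `(1 - e^{-u}) / u`. -/
lemma stableFunctional_sub_le [IsProbabilityMeasure ν] (hγ0 : 0 < γ) (hpos : ∀ᵐ w ∂ν, 0 < w)
    (hlap : ∀ r : ℝ, 0 ≤ r → ∫ w, Real.exp (-(r * w)) ∂ν = Real.exp (-(r ^ γ)))
    {u : ℝ} (hu : 0 < u) {F P : ℝ → ℝ} (hF : Continuous F) (hP : Continuous P) {η : ℝ}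
    (hη : 0 ≤ η) (h : ∀ x ∈ Icc (0:ℝ) 1, |P x - F x| ≤ η) :
    |stableFunctional ν γ u P - stableFunctional ν γ u F| ≤ η := by
  have hU : 0 ≤ u ^ γ⁻¹ := by positivity
  unfold stableFunctional
  rw [← mul_sub, ← integral_sub (integrable_stable hpos hU hP) (integrable_stable hpos hU hF),
    abs_mul, abs_of_pos (inv_pos.2 hu)]
  have hone := integral_one_sub_exp hpos hlap hU
  rw [← Real.rpow_mul hu.le, inv_mul_cancel₀ hγ0.ne', Real.rpow_one] at hone
  have hi : Integrable (fun w => (1 - Real.exp (-(u ^ γ⁻¹ * w)))) ν := by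
    simpa using integrable_stable hpos hU (continuous_const (y := (1:ℝ)))
  have hle : |∫ w, (P (Real.exp (-(u ^ γ⁻¹ * w))) * (1 - Real.exp (-(u ^ γ⁻¹ * w))) -
      F (Real.exp (-(u ^ γ⁻¹ * w))) * (1 - Real.exp (-(u ^ γ⁻¹ * w)))) ∂ν|
      ≤ ∫ w, η * (1 - Real.exp (-(u ^ γ⁻¹ * w))) ∂ν := by
    rw [← Real.norm_eq_abs]
    refine norm_integral_le_of_norm_le (hi.const_mul η) ?_
    filter_upwards [hpos] with w hw
    have hm := exp_neg_mem (x := u ^ γ⁻¹ * w) (by positivity)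
    rw [← sub_mul, norm_mul, Real.norm_of_nonneg (r := 1 - _) (by linarith [hm.2])]
    exact mul_le_mul_of_nonneg_right (h _ hm) (by linarith [hm.2])
  rw [integral_const_mul, hone] at hle
  have h3 : 1 - Real.exp (-u) ≤ u := by linarith [Real.add_one_le_exp (-u)]
  calc _ ≤ u⁻¹ * (η * (1 - Real.exp (-u))) := by gcongr
    _ ≤ u⁻¹ * (η * u) := by gcongr
    _ = η := by field_simp

/-- `levyFunctional` has norm at most `1` for the supremum norm on `[0,1]`. -/
lemma levyFunctional_sub_le (hγ0 : 0 < γ) (hγ1 : γ < 1)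
    {F P : ℝ → ℝ} (hF : Continuous F) (hP : Continuous P) {η : ℝ}
    (h : ∀ x ∈ Icc (0:ℝ) 1, |P x - F x| ≤ η) :
    |levyFunctional γ P - levyFunctional γ F| ≤ η := by
  have hG : 0 < Real.Gamma (1 - γ) := Real.Gamma_pos_of_pos (by linarith)
  unfold levyFunctional
  rw [← mul_sub, ← integral_sub (integrable_levyFunctional hγ0 hγ1 hP)
    (integrable_levyFunctional hγ0 hγ1 hF), abs_mul, abs_of_pos (by positivity)]
  have hone := integral_levy hγ0 hγ1 one_pos
  have hi := integrableOn_levy hγ0 hγ1 one_pos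
  simp only [one_mul, Real.one_rpow, mul_one] at hone hi
  have hle : |∫ w in Ioi (0:ℝ), (P (Real.exp (-w)) * ((1 - Real.exp (-w)) * w ^ (-1 - γ)) -
      F (Real.exp (-w)) * ((1 - Real.exp (-w)) * w ^ (-1 - γ)))|
      ≤ ∫ w in Ioi (0:ℝ), η * ((1 - Real.exp (-w)) * w ^ (-1 - γ)) := by
    rw [← Real.norm_eq_abs]
    refine norm_integral_le_of_norm_le (hi.const_mul η) ?_
    filter_upwards [ae_restrict_mem measurableSet_Ioi] with w hw
    have hw0 : 0 < w := hw
    have hm := exp_neg_mem (x := w) hw0.le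
    have hn : 0 ≤ (1 - Real.exp (-w)) * w ^ (-1 - γ) :=
      mul_nonneg (by linarith [hm.2]) (by positivity)
    rw [← sub_mul, norm_mul, Real.norm_of_nonneg hn]
    exact mul_le_mul_of_nonneg_right (h _ hm) hn
  rw [integral_const_mul, hone] at hle
  calc _ ≤ γ / Real.Gamma (1 - γ) * (η * (Real.Gamma (1 - γ) / γ)) := by gcongr
    _ = η := by field_simp

/-- Since `e^{-kw} (1 - e^{-w})` is a difference of two functions `1 - e^{-rw}`, both sides are
explicit, and the limit is the derivative at `u = 0` of `e^{-u k^γ} - e^{-u (k+1)^γ}`. -/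
lemma tendsto_stableFunctional_monomial [IsProbabilityMeasure ν] (hγ0 : 0 < γ) (hγ1 : γ < 1)
    (hpos : ∀ᵐ w ∂ν, 0 < w)
    (hlap : ∀ r : ℝ, 0 ≤ r → ∫ w, Real.exp (-(r * w)) ∂ν = Real.exp (-(r ^ γ))) (k : ℕ) :
    Tendsto (fun u => stableFunctional ν γ u (fun x => x ^ k)) (𝓝[>] 0)
      (𝓝 (levyFunctional γ (fun x => x ^ k))) := by
  have hG : 0 < Real.Gamma (1 - γ) := Real.Gamma_pos_of_pos (by linarith)
  have hL : levyFunctional γ (fun x => x ^ k) = ((k + 1 : ℝ)) ^ γ - (k : ℝ) ^ γ := by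
    have hJ : ∀ r : ℝ, 0 ≤ r →
        IntegrableOn (fun w : ℝ => (1 - Real.exp (-(r * w))) * w ^ (-1 - γ)) (Ioi 0) ∧
        ∫ w in Ioi (0:ℝ), (1 - Real.exp (-(r * w))) * w ^ (-1 - γ)
          = Real.Gamma (1 - γ) / γ * r ^ γ := by
      intro r hr
      rcases hr.eq_or_lt with rfl | hr
      · simp [Real.zero_rpow hγ0.ne']
      · exact ⟨integrableOn_levy hγ0 hγ1 hr, integral_levy hγ0 hγ1 hr⟩
    obtain ⟨i1, e1⟩ := hJ (k + 1) (by positivity)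
    obtain ⟨i0, e0⟩ := hJ k (by positivity)
    have : ∫ w in Ioi (0:ℝ), Real.exp (-w) ^ k * ((1 - Real.exp (-w)) * w ^ (-1 - γ))
        = Real.Gamma (1 - γ) / γ * (k + 1 : ℝ) ^ γ - Real.Gamma (1 - γ) / γ * (k : ℝ) ^ γ := by
      rw [← e1, ← e0, ← integral_sub i1 i0]
      refine integral_congr_ae (Eventually.of_forall fun w => ?_)
      beta_reduce
      rw [← Real.exp_nat_mul, show -(((k:ℝ) + 1) * w) = k * -w + -w by ring, Real.exp_add,
        show -((k:ℝ) * w) = k * -w by ring]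
      ring
    unfold levyFunctional
    rw [this]
    field_simp
  rw [hL]
  have hD : ∀ u : ℝ, 0 < u → stableFunctional ν γ u (fun x => x ^ k)
      = u⁻¹ * (Real.exp (-(u * (k : ℝ) ^ γ)) - Real.exp (-(u * (k + 1 : ℝ) ^ γ))) := by
    intro u hu
    have hU : 0 ≤ u ^ γ⁻¹ := by positivity
    have hUγ : (u ^ γ⁻¹) ^ γ = u := by
      rw [← Real.rpow_mul hu.le, inv_mul_cancel₀ hγ0.ne', Real.rpow_one]
    have e1 := integral_one_sub_exp hpos hlap (U := u ^ γ⁻¹ * (k + 1 : ℝ)) (by positivity)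
    have e0 := integral_one_sub_exp hpos hlap (U := u ^ γ⁻¹ * (k : ℝ)) (by positivity)
    have hi : ∀ r : ℝ, 0 ≤ r → Integrable (fun w => 1 - Real.exp (-(r * w))) ν := fun r hr => by
      simpa using integrable_stable hpos hr (continuous_const (y := (1:ℝ)))
    rw [Real.mul_rpow hU (by positivity), hUγ] at e1 e0
    unfold stableFunctional
    congr 1
    have : ∫ w, Real.exp (-(u ^ γ⁻¹ * w)) ^ k * (1 - Real.exp (-(u ^ γ⁻¹ * w))) ∂ν
        = (1 - Real.exp (-(u * (k + 1 : ℝ) ^ γ))) - (1 - Real.exp (-(u * (k : ℝ) ^ γ))) := by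
      rw [← e1, ← e0, ← integral_sub (hi _ (by positivity)) (hi _ (by positivity))]
      refine integral_congr_ae (Eventually.of_forall fun w => ?_)
      beta_reduce
      rw [← Real.exp_nat_mul, show -(u ^ γ⁻¹ * ((k:ℝ) + 1) * w)
        = k * -(u ^ γ⁻¹ * w) + -(u ^ γ⁻¹ * w) by ring, Real.exp_add,
        show -(u ^ γ⁻¹ * (k:ℝ) * w) = k * -(u ^ γ⁻¹ * w) by ring]
      ring
    rw [this]
    ring
  have hder : HasDerivAt (fun u : ℝ => Real.exp (-(u * (k : ℝ) ^ γ))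
      - Real.exp (-(u * (k + 1 : ℝ) ^ γ))) ((k + 1 : ℝ) ^ γ - (k : ℝ) ^ γ) 0 := by
    have h : ∀ a : ℝ, HasDerivAt (fun u : ℝ => Real.exp (-(u * a))) (-a) 0 := fun a => by
      convert! (((hasDerivAt_id (0:ℝ)).mul_const a).neg).exp using 1
      simp
    convert! (h _).sub (h _) using 1
    ring
  have := (hasDerivAt_iff_tendsto_slope_zero.1 hder).mono_left
    (nhdsWithin_mono 0 (fun x (hx : 0 < x) => hx.ne'))
  refine this.congr' ?_
  filter_upwards [self_mem_nhdsWithin] with u hu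
  rw [hD u hu]
  simp

lemma tendsto_stableFunctional_polynomial [IsProbabilityMeasure ν] (hγ0 : 0 < γ) (hγ1 : γ < 1)
    (hpos : ∀ᵐ w ∂ν, 0 < w)
    (hlap : ∀ r : ℝ, 0 ≤ r → ∫ w, Real.exp (-(r * w)) ∂ν = Real.exp (-(r ^ γ)))
    (P : Polynomial ℝ) :
    Tendsto (fun u => stableFunctional ν γ u (fun x => P.eval x)) (𝓝[>] 0)
      (𝓝 (levyFunctional γ (fun x => P.eval x))) := by
  induction P using Polynomial.induction_on' with
  | add p q hp hq =>
    have h1 : levyFunctional γ (fun x => (p + q).eval x)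
        = levyFunctional γ (fun x => p.eval x) + levyFunctional γ (fun x => q.eval x) := by
      unfold levyFunctional
      rw [← mul_add, ← integral_add (integrable_levyFunctional hγ0 hγ1 p.continuous)
        (integrable_levyFunctional hγ0 hγ1 q.continuous)]
      simp only [Polynomial.eval_add, add_mul]
    rw [h1]
    refine (hp.add hq).congr' ?_
    filter_upwards [self_mem_nhdsWithin] with u hu
    have hU : 0 ≤ u ^ γ⁻¹ := Real.rpow_nonneg (le_of_lt hu) _
    unfold stableFunctional
    rw [← mul_add, ← integral_add (integrable_stable hpos hU p.continuous)
        (integrable_stable hpos hU q.continuous)]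
    simp only [Polynomial.eval_add, add_mul]
  | monomial k a =>
    have h1 : levyFunctional γ (fun x => (Polynomial.monomial k a).eval x)
        = a * levyFunctional γ (fun x => x ^ k) := by
      unfold levyFunctional
      simp only [Polynomial.eval_monomial, mul_assoc, integral_const_mul]
      ring
    rw [h1]
    refine ((tendsto_stableFunctional_monomial hγ0 hγ1 hpos hlap k).const_mul a).congr fun u => ?_
    unfold stableFunctional
    simp only [Polynomial.eval_monomial, mul_assoc, integral_const_mul]
    ring

/-- Vague convergence of the rescaled stable laws to their Lévy measure. The Laplace transform
gives it for polynomials in `e^{-w}`, and the Weierstrass theorem extends it, since both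
functionals have norm at most `1`. -/
lemma tendsto_stableFunctional [IsProbabilityMeasure ν] (hγ0 : 0 < γ) (hγ1 : γ < 1)
    (hpos : ∀ᵐ w ∂ν, 0 < w)
    (hlap : ∀ r : ℝ, 0 ≤ r → ∫ w, Real.exp (-(r * w)) ∂ν = Real.exp (-(r ^ γ)))
    {F : ℝ → ℝ} (hF : Continuous F) :
    Tendsto (fun u => stableFunctional ν γ u F) (𝓝[>] 0) (𝓝 (levyFunctional γ F)) := by
  rw [Metric.tendsto_nhds]
  intro η hη
  obtain ⟨P, hP⟩ := exists_polynomial_near_of_continuousOn 0 1 F hF.continuousOn (η / 4)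
    (by positivity)
  have hP' : ∀ x ∈ Icc (0:ℝ) 1, |P.eval x - F x| ≤ η / 4 := fun x hx => (hP x hx).le
  have h1 := levyFunctional_sub_le hγ0 hγ1 hF P.continuous hP'
  have h2 := Metric.tendsto_nhds.1
    (tendsto_stableFunctional_polynomial hγ0 hγ1 hpos hlap P) (η / 4) (by positivity)
  filter_upwards [h2, self_mem_nhdsWithin] with u hu hu0
  have h3 := stableFunctional_sub_le hγ0 hpos hlap hu0 hF P.continuous (by positivity) hP'
  rw [Real.dist_eq] at hu ⊢
  rw [abs_le] at h1 h3
  rw [abs_lt] at hu ⊢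
  constructor <;> linarith [h1.1, h1.2, h3.1, h3.2, hu.1, hu.2]

end

/-! ### The heat kernel as a test function -/

/-- The heat kernel of `ℝⁿ` at time `v` and distance `1` from the source. -/
noncomputable def heatProfile (n : ℕ) (v : ℝ) : ℝ :=
  (4 * Real.pi * v) ^ (-((n:ℝ) / 2)) * Real.exp (-(1 / (4 * v)))

/-- The quotient `heatProfile n v / (1 - e^{-v})` as a function of `y = e^{-v}`, extended by zero
outside `(0,1)`. -/
noncomputable def heatQuotient (n : ℕ) (y : ℝ) : ℝ :=
  if 0 < y ∧ y < 1 then heatProfile n (-Real.log y) / (1 - y) else 0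

lemma heatQuotient_mul {n : ℕ} {v : ℝ} (hv : 0 < v) :
    heatQuotient n (Real.exp (-v)) * (1 - Real.exp (-v)) = heatProfile n v := by
  have h1 : Real.exp (-v) < 1 := by
    rw [← Real.exp_zero]; exact Real.exp_lt_exp.2 (by linarith)
  have h2 : 1 - Real.exp (-v) ≠ 0 := by linarith
  rw [heatQuotient, if_pos ⟨Real.exp_pos _, h1⟩, Real.log_exp, neg_neg, div_mul_cancel₀ _ h2]

lemma heatProfile_nonneg {n : ℕ} {v : ℝ} (hv : 0 < v) : 0 ≤ heatProfile n v := by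
  unfold heatProfile
  positivity

lemma measurable_heatProfile (n : ℕ) : Measurable (heatProfile n) := by
  unfold heatProfile
  fun_prop

lemma tendsto_heatProfile_atTop {n : ℕ} (hn : 1 ≤ n) :
    Tendsto (heatProfile n) atTop (𝓝 0) := by
  have hn' : (0:ℝ) < n / 2 := by
    have : (0:ℝ) < n := by exact_mod_cast hn
    positivity
  have h := (tendsto_rpow_neg_atTop hn').comp
    (tendsto_id.const_mul_atTop (show (0:ℝ) < 4 * Real.pi by positivity))
  refine tendsto_of_tendsto_of_tendsto_of_le_of_le' tendsto_const_nhds h ?_ ?_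
  · filter_upwards [eventually_gt_atTop 0] with v hv using heatProfile_nonneg hv
  · filter_upwards [eventually_gt_atTop 0] with v hv
    refine mul_le_of_le_one_right (by positivity) (Real.exp_le_one_iff.2 ?_)
    have : 0 < 1 / (4 * v) := by positivity
    linarith

lemma tendsto_heatProfile_div (n : ℕ) :
    Tendsto (fun v => heatProfile n v / v) (𝓝[>] 0) (𝓝 0) := by
  have h := (tendsto_rpow_mul_exp_neg_mul_atTop_nhds_zero ((n:ℝ) / 2 + 1) (1 / 4)
    (by norm_num)).comp (tendsto_inv_nhdsGT_zero (𝕜 := ℝ))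
  have h2 := h.const_mul ((4 * Real.pi) ^ (-((n:ℝ) / 2)))
  rw [mul_zero] at h2
  refine h2.congr' ?_
  filter_upwards [self_mem_nhdsWithin] with v hv
  have hv : 0 < v := hv
  simp only [Function.comp_apply, heatProfile]
  rw [Real.mul_rpow (by positivity) hv.le, Real.inv_rpow hv.le, Real.rpow_add_one hv.ne',
    Real.rpow_neg hv.le, show -(1 / 4) * v⁻¹ = -(1 / (4 * v)) by field_simp]
  field_simp

/-- At `y = 0` the function vanishes continuously because the heat kernel decays as time tends to
infinity (here `n ≥ 1` is needed), at `y = 1` because it is `o(v)` as `v → 0`. -/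
lemma continuous_heatQuotient {n : ℕ} (hn : 1 ≤ n) : Continuous (heatQuotient n) := by
  rw [continuous_iff_continuousAt]
  intro y
  rcases lt_trichotomy y 0 with hy | rfl | hy
  · refine (continuousAt_const (y := (0:ℝ))).congr ?_
    filter_upwards [Iio_mem_nhds hy] with x hx
    rw [heatQuotient, if_neg fun h => (lt_asymm h.1 hx)]
  · have h0 : heatQuotient n 0 = 0 := by simp [heatQuotient]
    suffices Tendsto (heatQuotient n) (𝓝[≤] 0 ⊔ 𝓝[>] 0) (𝓝 0) by
      rw [nhdsLE_sup_nhdsGT] at this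
      rwa [ContinuousAt, h0]
    rw [tendsto_sup]
    constructor
    · refine tendsto_const_nhds.congr' ?_
      filter_upwards [self_mem_nhdsWithin] with x hx
      rw [heatQuotient, if_neg fun h => (not_lt.2 hx h.1)]
    · have h1 : Tendsto (fun y : ℝ => heatProfile n (-Real.log y)) (𝓝[>] 0) (𝓝 0) :=
        (tendsto_heatProfile_atTop hn).comp (tendsto_neg_atBot_atTop.comp
          Real.tendsto_log_nhdsGT_zero)
      have h2 : Tendsto (fun y : ℝ => 1 - y) (𝓝[>] 0) (𝓝 1) := by
        have : Tendsto (fun y : ℝ => 1 - y) (𝓝 0) (𝓝 (1 - 0)) :=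
          (continuous_const.sub continuous_id).tendsto _
        rw [sub_zero] at this
        exact this.mono_left nhdsWithin_le_nhds
      have h3 := h1.div h2 one_ne_zero
      rw [zero_div] at h3
      refine h3.congr' ?_
      filter_upwards [Ioo_mem_nhdsGT (zero_lt_one' ℝ)] with x hx
      rw [heatQuotient, if_pos ⟨hx.1, hx.2⟩]
      rfl
  rcases lt_trichotomy y 1 with hy1 | rfl | hy1
  · have hne : 1 - y ≠ 0 := by linarith
    have hl : 0 < -Real.log y := by linarith [Real.log_neg hy hy1]
    have hc : ContinuousAt (fun y => heatProfile n (-Real.log y) / (1 - y)) y := by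
      have hlog : ContinuousAt (fun y => -Real.log y) y := (Real.continuousAt_log hy.ne').neg
      unfold heatProfile
      refine ContinuousAt.div (ContinuousAt.mul ?_ ?_) (by fun_prop) hne
      · exact (hlog.const_mul _).rpow_const (Or.inl (by positivity))
      · refine Real.continuous_exp.continuousAt.comp (ContinuousAt.neg ?_)
        exact continuousAt_const.div (hlog.const_mul _) (by positivity)
    refine hc.congr ?_
    filter_upwards [Ioo_mem_nhds hy hy1] with x hx
    rw [heatQuotient, if_pos ⟨hx.1, hx.2⟩]
  · have h0 : heatQuotient n 1 = 0 := by simp [heatQuotient]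
    suffices Tendsto (heatQuotient n) (𝓝[<] 1 ⊔ 𝓝[≥] 1) (𝓝 0) by
      rw [nhdsLT_sup_nhdsGE] at this
      rwa [ContinuousAt, h0]
    rw [tendsto_sup]
    constructor
    · have hl : Tendsto (fun y : ℝ => -Real.log y) (𝓝[<] 1) (𝓝[>] 0) := by
        refine tendsto_nhdsWithin_iff.2 ⟨?_, ?_⟩
        · have := (Real.continuousAt_log one_ne_zero).neg.tendsto
          rw [Pi.neg_apply, Real.log_one, neg_zero] at this
          exact this.mono_left nhdsWithin_le_nhds
        · filter_upwards [Ioo_mem_nhdsLT (zero_lt_one' ℝ)] with x hx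
          have := Real.log_neg hx.1 hx.2
          simp only [mem_Ioi]
          linarith
      have h1 := ((tendsto_heatProfile_div n).comp hl).const_mul 2
      rw [mul_zero] at h1
      refine tendsto_of_tendsto_of_tendsto_of_le_of_le' tendsto_const_nhds h1 ?_ ?_
      · filter_upwards [Ioo_mem_nhdsLT (zero_lt_one' ℝ)] with x hx
        have hl : 0 < -Real.log x := by linarith [Real.log_neg hx.1 hx.2]
        rw [heatQuotient, if_pos ⟨hx.1, hx.2⟩]
        exact div_nonneg (heatProfile_nonneg hl) (by linarith [hx.2])
      · filter_upwards [Ioo_mem_nhdsLT (show (1/2:ℝ) < 1 by norm_num)] with x hx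
        have hx0 : 0 < x := by linarith [hx.1]
        have hl : 0 < -Real.log x := by linarith [Real.log_neg hx0 hx.2]
        rw [heatQuotient, if_pos ⟨hx0, hx.2⟩]
        simp only [Function.comp_apply]
        -- `-log x ≤ (1 - x) / x ≤ 2 (1 - x)`
        have h3 : -Real.log x ≤ 2 * (1 - x) := by
          have h4 := Real.one_sub_inv_le_log_of_pos hx0
          have h5 : x⁻¹ - 1 ≤ 2 * (1 - x) := by
            rw [show x⁻¹ - 1 = (1 - x) * x⁻¹ by field_simp, mul_comm]
            have : x⁻¹ ≤ 2 := by
              rw [inv_le_comm₀ hx0 two_pos]; linarith [hx.1]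
            exact mul_le_mul_of_nonneg_right this (by linarith [hx.2])
          linarith
        have h6 := heatProfile_nonneg (n := n) hl
        rw [mul_div_assoc', div_le_div_iff₀ (by linarith [hx.2]) hl]
        nlinarith
    · refine tendsto_const_nhds.congr' ?_
      filter_upwards [self_mem_nhdsWithin] with x hx
      rw [heatQuotient, if_neg fun h => (not_lt.2 hx h.2)]
  · refine (continuousAt_const (y := (0:ℝ))).congr ?_
    filter_upwards [Ioi_mem_nhds hy1] with x hx
    rw [heatQuotient, if_neg fun h => (lt_asymm h.2 hx)]

lemma levyFunctional_heatQuotient {γ : ℝ} (hγ0 : 0 < γ) (n : ℕ) :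
    levyFunctional γ (heatQuotient n) = γ * 4 ^ γ * Real.Gamma ((n:ℝ)/2 + γ) /
            (Real.pi ^ ((n:ℝ)/2) * Real.Gamma (1 - γ)) := by
  have h1 : ∫ w in Ioi (0:ℝ), heatQuotient n (Real.exp (-w)) *
      ((1 - Real.exp (-w)) * w ^ (-1 - γ))
      = ∫ w in Ioi (0:ℝ), heatProfile n w * w ^ (-1 - γ) := by
    refine setIntegral_congr_fun measurableSet_Ioi fun w hw => ?_
    rw [← mul_assoc, heatQuotient_mul hw]
  -- substitute `w = 1 / x`
  have h2 : ∫ w in Ioi (0:ℝ), heatProfile n w * w ^ (-1 - γ)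
      = ∫ x in Ioi (0:ℝ), (4 * Real.pi) ^ (-((n:ℝ) / 2)) *
        (x ^ ((n:ℝ) / 2 + γ - 1) * Real.exp (-(1 / 4 * x))) := by
    rw [← integral_comp_rpow_Ioi (fun w => heatProfile n w * w ^ (-1 - γ)) (p := -1) (by norm_num)]
    refine setIntegral_congr_fun measurableSet_Ioi fun x hx => ?_
    have hx : 0 < x := hx
    simp only [heatProfile, smul_eq_mul, abs_neg, abs_one, one_mul]
    rw [Real.mul_rpow (by positivity) (by positivity), ← Real.rpow_mul hx.le, ← Real.rpow_mul hx.le,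
      show (1 / (4 * x ^ (-1:ℝ))) = 1 / 4 * x by rw [Real.rpow_neg_one]; field_simp,
      show ((n:ℝ) / 2 + γ - 1) = (-1 - 1) + (-1 * (-(n / 2))) + (-1 * (-1 - γ)) by ring,
      Real.rpow_add hx, Real.rpow_add hx]
    ring
  have hn : (0:ℝ) ≤ n / 2 := by positivity
  have h4 : (4:ℝ) ^ ((n:ℝ) / 2 + γ) = 4 ^ ((n:ℝ)/2) * 4 ^ γ := Real.rpow_add (by norm_num) _ _
  unfold levyFunctional
  rw [h1, h2, integral_const_mul, Real.integral_rpow_mul_exp_neg_mul_Ioi (by linarith) (by norm_num),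
    Real.mul_rpow (by norm_num) Real.pi_pos.le, Real.rpow_neg (by norm_num),
    Real.rpow_neg Real.pi_pos.le, show (1 / (1 / 4) : ℝ) = 4 by norm_num, h4]
  have : (4:ℝ) ^ ((n:ℝ)/2) ≠ 0 := by positivity
  field_simp

/-! ### Subordination and the negative moment -/

/-- The real part of the Fourier transform of a Gaussian. -/
lemma integral_cos_gaussian {n : ℕ} {b : ℝ} (hb : 0 < b) (z : EuclideanSpace ℝ (Fin n)) :
    ∫ ξ : EuclideanSpace ℝ (Fin n), Real.cos ⟪z, ξ⟫ * Real.exp (-(b * ‖ξ‖ ^ 2))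
      = (Real.pi / b) ^ ((n:ℝ) / 2) * Real.exp (-(‖z‖ ^ 2 / (4 * b))) := by
  have hb' : 0 < (b : ℂ).re := by simpa using hb
  have h := GaussianFourier.integral_cexp_neg_mul_sq_norm_add hb' Complex.I z
  have hi := GaussianFourier.integrable_cexp_neg_mul_sq_norm_add hb' Complex.I z
  have h2 := congrArg Complex.re h
  have h3 : ∀ ξ : EuclideanSpace ℝ (Fin n),
      (Complex.exp (-(b:ℂ) * (‖ξ‖:ℂ) ^ 2 + Complex.I * (⟪z, ξ⟫ : ℝ))).re
        = Real.cos ⟪z, ξ⟫ * Real.exp (-(b * ‖ξ‖ ^ 2)) := by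
    intro ξ
    rw [Complex.exp_re]
    have e1 : (-(b:ℂ) * (‖ξ‖:ℂ) ^ 2 + Complex.I * (⟪z, ξ⟫ : ℝ)).re = -(b * ‖ξ‖ ^ 2) := by
      rw [← Complex.ofReal_pow]; simp [-Complex.ofReal_pow]
    have e2 : (-(b:ℂ) * (‖ξ‖:ℂ) ^ 2 + Complex.I * (⟪z, ξ⟫ : ℝ)).im = ⟪z, ξ⟫ := by
      rw [← Complex.ofReal_pow]; simp [-Complex.ofReal_pow]
    rw [e1, e2, mul_comm]
  have h4 := integral_re hi
  simp only [RCLike.re_eq_complex_re] at h4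
  rw [← h4] at h2
  simp only [h3] at h2
  rw [h2, finrank_euclideanSpace, Fintype.card_fin]
  have e3 : ((Real.pi : ℂ) / b) ^ ((n : ℂ) / 2) = (((Real.pi / b) ^ ((n:ℝ) / 2) : ℝ) : ℂ) := by
    rw [Complex.ofReal_cpow (by positivity)]; push_cast; rfl
  have e4 : Complex.exp (Complex.I ^ 2 * (‖z‖ : ℂ) ^ 2 / (4 * b))
      = ((Real.exp (-(‖z‖ ^ 2 / (4 * b))) : ℝ) : ℂ) := by
    rw [Complex.I_sq]; push_cast; congr 1; ring
  rw [e3, e4, ← Complex.ofReal_mul, Complex.ofReal_re]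

lemma integrable_exp_neg_norm_rpow {n : ℕ} (hn : 1 ≤ n) {s q : ℝ} (hs : 0 < s) (hq : 0 < q) :
    Integrable (fun ξ : EuclideanSpace ℝ (Fin n) => Real.exp (-(s * ‖ξ‖ ^ q))) := by
  have : Nonempty (Fin n) := ⟨⟨0, hn⟩⟩
  rw [integrable_fun_norm_addHaar volume (f := fun y => Real.exp (-(s * y ^ q))),
    finrank_euclideanSpace, Fintype.card_fin]
  have h := integrableOn_rpow_mul_exp_neg_mul_rpow (p := q) (s := ((n - 1 : ℕ) : ℝ)) (b := s)
    (by have : (0:ℝ) ≤ ((n - 1 : ℕ) : ℝ) := by positivity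
        linarith) hq hs
  refine h.congr_fun (fun x _ => ?_) measurableSet_Ioi
  simp [Real.rpow_natCast]

/-- Subordination: the isotropic `2γ`-stable density is a mixture of heat kernels, the mixing law
being the one-sided `γ`-stable law. -/
lemma stable_density_eq {n : ℕ} (hn : 1 ≤ n) {γ : ℝ} (hγ0 : 0 < γ) {ν : Measure ℝ}
    [IsProbabilityMeasure ν] (hpos : ∀ᵐ w ∂ν, 0 < w)
    (hlap : ∀ r : ℝ, 0 ≤ r → ∫ w, Real.exp (-(r * w)) ∂ν = Real.exp (-(r ^ γ)))
    {s : ℝ} (hs : 0 < s) {z : EuclideanSpace ℝ (Fin n)} (hz : z ≠ 0) :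
    (2 * Real.pi) ^ (-(n:ℝ)) * ∫ ξ : EuclideanSpace ℝ (Fin n),
          Real.cos ⟪z, ξ⟫ * Real.exp (-(s * ‖ξ‖ ^ (2*γ)))
      = ‖z‖ ^ (-(n:ℝ)) * (s * ‖z‖ ^ (-(2 * γ)) *
        stableFunctional ν γ (s * ‖z‖ ^ (-(2 * γ))) (heatQuotient n)) := by
  have ha : 0 < ‖z‖ := norm_pos_iff.2 hz
  set a := ‖z‖ with hadef
  have hS : 0 < s ^ γ⁻¹ := by positivity
  have hmix : ∀ ξ : EuclideanSpace ℝ (Fin n), Real.exp (-(s * ‖ξ‖ ^ (2*γ)))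
      = ∫ w, Real.exp (-(s ^ γ⁻¹ * ‖ξ‖ ^ 2 * w)) ∂ν := by
    intro ξ
    rw [hlap _ (by positivity), Real.mul_rpow hS.le (by positivity), ← Real.rpow_mul hs.le,
      inv_mul_cancel₀ hγ0.ne', Real.rpow_one, ← Real.rpow_natCast ‖ξ‖ 2,
      ← Real.rpow_mul (norm_nonneg _)]
    norm_num
  have hint : Integrable (Function.uncurry fun (ξ : EuclideanSpace ℝ (Fin n)) (w : ℝ) =>
      Real.cos ⟪z, ξ⟫ * Real.exp (-(s ^ γ⁻¹ * ‖ξ‖ ^ 2 * w))) (volume.prod ν) := by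
    have hm : Measurable (Function.uncurry fun (ξ : EuclideanSpace ℝ (Fin n)) (w : ℝ) =>
      Real.cos ⟪z, ξ⟫ * Real.exp (-(s ^ γ⁻¹ * ‖ξ‖ ^ 2 * w))) := by
      unfold Function.uncurry
      exact Continuous.measurable (by fun_prop)
    rw [integrable_prod_iff hm.aestronglyMeasurable]
    constructor
    · refine Eventually.of_forall fun ξ => ?_
      refine Integrable.of_bound (C := 1)
        (Measurable.aestronglyMeasurable (by unfold Function.uncurry; fun_prop)) ?_
      filter_upwards [hpos] with w hw
      simp only [Function.uncurry]
      rw [norm_mul, Real.norm_eq_abs, Real.norm_of_nonneg (Real.exp_pos _).le]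
      exact mul_le_one₀ (Real.abs_cos_le_one _) (Real.exp_pos _).le
        (exp_neg_mem (by positivity)).2
    · have h1 := integrable_exp_neg_norm_rpow hn hs (q := 2 * γ) (by positivity)
      refine h1.mono' hm.norm.aestronglyMeasurable.integral_prod_right' ?_
      refine Eventually.of_forall fun ξ => ?_
      simp only [Function.uncurry, norm_mul, Real.norm_of_nonneg (Real.exp_pos _).le,
        integral_const_mul]
      rw [← hmix ξ, norm_norm, Real.norm_of_nonneg (Real.exp_pos _).le]
      exact mul_le_of_le_one_left (Real.exp_pos _).le (Real.abs_cos_le_one _)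
  have h1 : ∫ ξ : EuclideanSpace ℝ (Fin n), Real.cos ⟪z, ξ⟫ * Real.exp (-(s * ‖ξ‖ ^ (2*γ)))
      = ∫ w, (Real.pi / (s ^ γ⁻¹ * w)) ^ ((n:ℝ) / 2)
          * Real.exp (-(a ^ 2 / (4 * (s ^ γ⁻¹ * w)))) ∂ν := by
    simp only [hmix, ← integral_const_mul]
    rw [integral_integral_swap hint]
    refine integral_congr_ae ?_
    filter_upwards [hpos] with w hw
    rw [← integral_cos_gaussian (show 0 < s ^ γ⁻¹ * w by positivity) z]
    refine integral_congr_ae (Eventually.of_forall fun ξ => ?_)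
    ring_nf
  have hv : 0 < s * a ^ (-(2 * γ)) := by positivity
  have hU : (s * a ^ (-(2 * γ))) ^ γ⁻¹ = s ^ γ⁻¹ / a ^ 2 := by
    rw [Real.mul_rpow hs.le (by positivity), ← Real.rpow_mul ha.le,
      show -(2 * γ) * γ⁻¹ = -((2:ℕ):ℝ) by push_cast; field_simp, Real.rpow_neg ha.le,
      Real.rpow_natCast]
    rfl
  unfold stableFunctional
  rw [h1, mul_inv_cancel_left₀ hv.ne', ← integral_const_mul, ← integral_const_mul, hU]
  refine integral_congr_ae ?_
  filter_upwards [hpos] with w hw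
  have hw' : 0 < s ^ γ⁻¹ / a ^ 2 * w := by positivity
  rw [heatQuotient_mul hw']
  unfold heatProfile
  set b := s ^ γ⁻¹ * w with hb
  have hb0 : 0 < b := by positivity
  have e1 : s ^ γ⁻¹ / a ^ 2 * w = b / a ^ 2 := by rw [hb]; ring
  have e2 : a ^ 2 / (4 * b) = 1 / (4 * (b / a ^ 2)) := by field_simp
  have e3 : ∀ x : ℝ, 0 < x → x ^ (-(n:ℝ)) = (x ^ 2) ^ (-((n:ℝ) / 2)) := fun x hx => by
    rw [← Real.rpow_natCast x 2, ← Real.rpow_mul hx.le]; congr 1; push_cast; ring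
  rw [e1, e2, ← mul_assoc, ← mul_assoc, e3 _ (by positivity), e3 a ha,
    ← Real.mul_rpow (by positivity) (by positivity),
    show Real.pi / b = (b / Real.pi)⁻¹ by rw [inv_div], Real.inv_rpow (by positivity),
    ← Real.rpow_neg (by positivity), ← Real.mul_rpow (by positivity) (by positivity)]
  congr 2
  field_simp
  norm_num

/-- The negative moment of order `β` of the one-sided `β`-stable law, from
`s^{-β} Γ(β) = ∫ r^{β-1} e^{-rs} dr` and Fubini's theorem. -/
lemma stable_neg_moment {β : ℝ} (hβ0 : 0 < β) {μ : Measure ℝ} [IsProbabilityMeasure μ]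
    (hlap : ∀ r : ℝ, 0 < r →
      ∫ s in Ioi (0:ℝ), Real.exp (-(r * s)) ∂μ = Real.exp (-(r ^ β))) :
    IntegrableOn (fun s => s ^ (-β)) (Ioi 0) μ ∧
      ∫ s in Ioi (0:ℝ), s ^ (-β) ∂μ = 1 / (β * Real.Gamma β) := by
  have hG : 0 < Real.Gamma β := Real.Gamma_pos_of_pos hβ0
  have hm : Measurable (Function.uncurry fun (s r : ℝ) => r ^ (β - 1) * Real.exp (-(s * r))) := by
    unfold Function.uncurry
    fun_prop
  have hint : Integrable (Function.uncurry fun (s r : ℝ) => r ^ (β - 1) * Real.exp (-(s * r)))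
      ((μ.restrict (Ioi 0)).prod (volume.restrict (Ioi 0))) := by
    rw [integrable_prod_iff' hm.aestronglyMeasurable]
    constructor
    · filter_upwards [ae_restrict_mem measurableSet_Ioi] with r hr
      have hr0 : 0 < r := hr
      refine Integrable.of_bound (C := r ^ (β - 1))
        (Measurable.aestronglyMeasurable (by unfold Function.uncurry; fun_prop)) ?_
      filter_upwards [ae_restrict_mem measurableSet_Ioi] with s hs
      have hs0 : 0 < s := hs
      simp only [Function.uncurry]
      rw [Real.norm_of_nonneg (by positivity)]
      exact mul_le_of_le_one_right (by positivity) (exp_neg_mem (by positivity)).2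
    · have h := integrableOn_rpow_mul_exp_neg_mul_rpow (p := β) (s := β - 1) (b := 1)
        (by linarith) hβ0 one_pos
      refine h.congr_fun (fun r hr => ?_) measurableSet_Ioi
      have hr0 : 0 < r := hr
      simp only [Function.uncurry, norm_mul, Real.norm_of_nonneg (Real.exp_pos _).le,
        integral_const_mul]
      rw [Real.norm_of_nonneg (by positivity), neg_one_mul, ← hlap r hr0]
      simp only [mul_comm r]
  have h1 : ∀ s ∈ Ioi (0:ℝ), ∫ r in Ioi (0:ℝ), r ^ (β - 1) * Real.exp (-(s * r))
      = s ^ (-β) * Real.Gamma β := by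
    intro s hs
    have hs0 : 0 < s := hs
    rw [Real.integral_rpow_mul_exp_neg_mul_Ioi hβ0 hs0, one_div, Real.inv_rpow hs0.le,
      Real.rpow_neg hs0.le]
  have hI : IntegrableOn (fun s => s ^ (-β) * Real.Gamma β) (Ioi 0) μ :=
    IntegrableOn.congr_fun hint.integral_prod_left h1 measurableSet_Ioi
  refine ⟨?_, ?_⟩
  · have := hI.mul_const (Real.Gamma β)⁻¹
    simp only [mul_inv_cancel_right₀ hG.ne'] at this
    exact this
  · have h2 := integral_integral_swap hint
    rw [setIntegral_congr_fun measurableSet_Ioi h1, integral_mul_const] at h2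
    have h3 : ∫ r in Ioi (0:ℝ), ∫ s in Ioi (0:ℝ), r ^ (β - 1) * Real.exp (-(s * r)) ∂μ
        = 1 / β := by
      have h4 := integral_rpow_mul_exp_neg_rpow (p := β) (q := β - 1) hβ0 (by linarith)
      rw [sub_add_cancel, div_self hβ0.ne', Real.Gamma_one, mul_one] at h4
      rw [← h4]
      refine setIntegral_congr_fun measurableSet_Ioi fun r hr => ?_
      have hr0 : 0 < r := hr
      simp only [integral_const_mul]
      rw [← hlap r hr0]
      simp only [mul_comm r]
    rw [h3] at h2
    field_simp at h2 ⊢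
    linarith

/-! ### The asymptotics of the fundamental solution -/

lemma measurable_stableFunctional (ν : Measure ℝ) [SFinite ν] (γ : ℝ) {F : ℝ → ℝ}
    (hF : Continuous F) : Measurable fun u => stableFunctional ν γ u F := by
  unfold stableFunctional
  refine measurable_inv.mul (StronglyMeasurable.measurable ?_)
  refine StronglyMeasurable.integral_prod_right (f := fun (u w : ℝ) =>
    F (Real.exp (-(u ^ γ⁻¹ * w))) * (1 - Real.exp (-(u ^ γ⁻¹ * w)))) ?_
  refine Measurable.stronglyMeasurable ?_
  unfold Function.uncurry
  fun_prop

theorem stmt_14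
    (β γ : ℝ) (hβ0 : 0 < β) (hβ1 : β < 1) (hγ0 : 0 < γ) (hγ1 : γ < 1)
    (n : ℕ) (hn : 1 ≤ n)
    (μ : Measure ℝ) (hprob : IsProbabilityMeasure μ)
    (hsupp : μ (Set.Iic 0) = 0)
    (hlap : ∀ r : ℝ, 0 < r →
      ∫ s in Set.Ioi (0:ℝ), Real.exp (-(r * s)) ∂μ = Real.exp (-(r ^ β)))
    (p2γ : ℝ → EuclideanSpace ℝ (Fin n) → ℝ)
    (hp2γ : ∀ s : ℝ, 0 < s → ∀ z : EuclideanSpace ℝ (Fin n),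
      p2γ s z = (2 * Real.pi) ^ (-(n:ℝ)) *
        ∫ ξ : EuclideanSpace ℝ (Fin n),
          Real.cos ⟪z, ξ⟫ * Real.exp (-(s * ‖ξ‖ ^ (2*γ))))
    (p : ℝ → EuclideanSpace ℝ (Fin n) → EuclideanSpace ℝ (Fin n) → ℝ)
    (hp : ∀ t : ℝ, 0 < t → ∀ x y : EuclideanSpace ℝ (Fin n),
      p t x y = ∫ s in Set.Ioi (0:ℝ), p2γ (t ^ β * s ^ (-β)) (x - y) ∂μ) :
    ∀ ε : ℝ, 0 < ε → ∃ δ : ℝ, 0 < δ ∧ ∀ t : ℝ, 0 < t →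
      ∀ x y : EuclideanSpace ℝ (Fin n), x ≠ y →
      dist x y ^ (-(2*γ/β)) * t ≤ δ →
      |p t x y /
        (γ * 4 ^ γ * Real.Gamma ((n:ℝ)/2 + γ) /
            (Real.pi ^ ((n:ℝ)/2) * Real.Gamma (1 - γ) * β * Real.Gamma β) *
          (dist x y ^ (-((n:ℝ) + 2*γ)) * t ^ β)) - 1| ≤ ε := by
  intro ε hε
  obtain ⟨ν, hν, hpos, hνlap⟩ := exists_stable hγ0 hγ1
  have hFc := continuous_heatQuotient hn
  have hGγ : 0 < Real.Gamma (1 - γ) := Real.Gamma_pos_of_pos (by linarith)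
  have hGβ : 0 < Real.Gamma β := Real.Gamma_pos_of_pos hβ0
  have hGn : 0 < Real.Gamma ((n:ℝ) / 2 + γ) := Real.Gamma_pos_of_pos (by positivity)
  obtain ⟨hmi, hmv⟩ := stable_neg_moment hβ0 hlap
  set R : ℝ → ℝ := fun u => stableFunctional ν γ u (heatQuotient n) with hR
  set D : ℝ := γ * 4 ^ γ * Real.Gamma ((n:ℝ)/2 + γ) /
            (Real.pi ^ ((n:ℝ)/2) * Real.Gamma (1 - γ) * β * Real.Gamma β) with hD
  have hD0 : 0 < D := by positivity
  have hRm : Measurable R := measurable_stableFunctional ν γ hFc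
  have hRlim : Tendsto R (𝓝[>] 0) (𝓝 (D * (β * Real.Gamma β))) := by
    have h := tendsto_stableFunctional hγ0 hγ1 hpos hνlap hFc
    rw [levyFunctional_heatQuotient hγ0] at h
    convert h using 2
    rw [hD]
    field_simp
  obtain ⟨C, hC⟩ := isCompact_Icc.exists_bound_of_continuousOn
    (s := Icc (0:ℝ) 1) hFc.continuousOn
  have hC0 : 0 ≤ C := (norm_nonneg _).trans (hC 0 (by simp))
  -- the bound on `stableFunctional` applied to the pair `0`, `heatQuotient n`
  have hRbd : ∀ u : ℝ, 0 < u → |R u| ≤ C := by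
    intro u hu
    have h := stableFunctional_sub_le hγ0 hpos hνlap hu (continuous_const (y := (0:ℝ))) hFc hC0
      (fun x hx => by simpa using hC x hx)
    simpa [stableFunctional, hR] using h
  -- dominated convergence, the dominating function being a multiple of `s^{-β}`
  have hH : Tendsto (fun τ : ℝ => ∫ s in Ioi (0:ℝ), s ^ (-β) * R (τ * s ^ (-β)) ∂μ) (𝓝[>] 0)
      (𝓝 D) := by
    have hval : ∫ s in Ioi (0:ℝ), s ^ (-β) * (D * (β * Real.Gamma β)) ∂μ = D := by
      rw [integral_mul_const, hmv]
      field_simp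
    have hlim : Tendsto (fun τ : ℝ => ∫ s in Ioi (0:ℝ), s ^ (-β) * R (τ * s ^ (-β)) ∂μ) (𝓝[>] 0)
        (𝓝 (∫ s in Ioi (0:ℝ), s ^ (-β) * (D * (β * Real.Gamma β)) ∂μ)) := by
      refine tendsto_integral_filter_of_dominated_convergence (fun s => s ^ (-β) * C) ?_ ?_
        (hmi.mul_const C) ?_
      · exact Eventually.of_forall fun τ => Measurable.aestronglyMeasurable (by fun_prop)
      · filter_upwards [self_mem_nhdsWithin] with τ hτ
        have hτ0 : 0 < τ := hτ
        filter_upwards [ae_restrict_mem measurableSet_Ioi] with s hs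
        have hs0 : 0 < s := hs
        rw [norm_mul, Real.norm_of_nonneg (by positivity)]
        exact mul_le_mul_of_nonneg_left (hRbd _ (by positivity)) (by positivity)
      · filter_upwards [ae_restrict_mem measurableSet_Ioi] with s hs
        have hs0 : 0 < s ^ (-β) := Real.rpow_pos_of_pos hs _
        refine (hRlim.comp ?_).const_mul _
        refine tendsto_nhdsWithin_iff.2 ⟨?_, ?_⟩
        · have : Tendsto (fun τ : ℝ => τ * s ^ (-β)) (𝓝 0) (𝓝 (0 * s ^ (-β))) :=
            (continuous_id.mul continuous_const).tendsto _
          rw [zero_mul] at this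
          exact this.mono_left nhdsWithin_le_nhds
        · filter_upwards [self_mem_nhdsWithin] with τ hτ
          exact mul_pos hτ hs0
    rwa [hval] at hlim
  have hev := Metric.tendsto_nhds.1 (hH.div_const D) ε hε
  rw [div_self hD0.ne'] at hev
  obtain ⟨δ₀, hδ₀, hsub⟩ := mem_nhdsGT_iff_exists_Ioo_subset.1 hev
  have hδ₀' : 0 < δ₀ := hδ₀
  refine ⟨(δ₀ / 2) ^ β⁻¹, by positivity, fun t ht x y hxy hle => ?_⟩
  have ha : 0 < dist x y := dist_pos.2 hxy
  set a := dist x y with hadef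
  set τ := t ^ β * a ^ (-(2 * γ)) with hτdef
  have hτ0 : 0 < τ := by positivity
  -- `τ` is the `β`-th power of the quantity assumed small
  have hτlt : τ < δ₀ := by
    have h1 : (a ^ (-(2*γ/β)) * t) ^ β = τ := by
      rw [Real.mul_rpow (by positivity) ht.le, ← Real.rpow_mul ha.le, mul_comm, hτdef]
      congr 2
      field_simp
    have h2 := Real.rpow_le_rpow (by positivity) hle hβ0.le
    rw [h1, ← Real.rpow_mul (by positivity), inv_mul_cancel₀ hβ0.ne', Real.rpow_one] at h2
    linarith
  have hp' : p t x y = a ^ (-(n:ℝ)) * τ * ∫ s in Ioi (0:ℝ), s ^ (-β) * R (τ * s ^ (-β)) ∂μ := by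
    rw [hp t ht x y, ← integral_const_mul]
    refine setIntegral_congr_fun measurableSet_Ioi fun s hs => ?_
    have hs0 : 0 < s := hs
    have hts : 0 < t ^ β * s ^ (-β) := by positivity
    have hnorm : ‖x - y‖ = a := by rw [hadef, dist_eq_norm]
    simp only [hp2γ _ hts]
    rw [stable_density_eq hn hγ0 hpos hνlap hts (sub_ne_zero.2 hxy), hnorm,
      show t ^ β * s ^ (-β) * a ^ (-(2 * γ)) = τ * s ^ (-β) by rw [hτdef]; ring]
    ring
  have hden : a ^ (-((n:ℝ) + 2*γ)) * t ^ β = a ^ (-(n:ℝ)) * τ := by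
    rw [neg_add, Real.rpow_add ha, hτdef]
    ring
  have hfin := hsub ⟨hτ0, hτlt⟩
  simp only [mem_ofPred_eq, Real.dist_eq] at hfin
  rw [hp', hden]
  have han : 0 < a ^ (-(n:ℝ)) := by positivity
  rw [mul_comm D, mul_div_mul_left _ _ (by positivity)]
  exact hfin.le
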